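/- Let k ∈ {0,1}. Suppose m₀ is the unique maximizer of 𝑝̃ on [0,1], that L₁^{(ℓ)}(m₀) = 0 for all 0 ≤ ℓ ≤ 2k, and that L₁^{(2k+1)}(m₀) > 0. Set W = (M − N·m₀)/N^{(2k+1)/(2k+2)} and W' = (M' − N·m₀)/N^{(2k+1)/(2k+2)}, where (M,M') come from the exchangeable pair. Then E[W − W' | W] = g(W) + r(W), where g(W) = L₁^{(2k+1)}(m₀)·W^{2k+1}/((2k+1)!·N^{(2k+1)/(k+1)}) and the remainder satisfies |r(W)| ≤ K·N^{−(4k+3)/(2k+2)}·(W^{2k+2} + 1) for a constant K independent of N. -/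

import Mathlib

open Real Finset MeasureTheory

noncomputable section

/-- Dimer configurations (matchings of the complete graph on `Fin N`), encoded as
involutions of `Fin N`: fixed points are monomers, 2-cycles are dimers. -/
abbrev Dimer (N : ℕ) := {f : Fin N → Fin N // ∀ i, f (f i) = i}

/-- The set of monomers (dimer-free vertices) of a dimer configuration. -/
def monomers {N : ℕ} (D : Dimer N) : Finset (Fin N) :=
  Finset.univ.filter fun i => D.1 i = i

/-- Monomer density `m(D) = |𝓜(D)|/N`. -/
def mDim {N : ℕ} (D : Dimer N) : ℝ := ((monomers D).card : ℝ) / N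

/-- The parameter `b = (log N)/2 + h - J`. -/
def bIMD (N : ℕ) (J h : ℝ) : ℝ := Real.log N / 2 + h - J

/-- The Gibbs weight `exp(-H(D)) = exp(N (a m(D)^2 + b m(D)))` with `a = J`. -/
def wDim (N : ℕ) (J h : ℝ) (D : Dimer N) : ℝ :=
  Real.exp (N * (J * mDim D ^ 2 + bIMD N J h * mDim D))

/-- The probability of an event `A` under the IMD Gibbs measure. -/
def probDim (N : ℕ) (J h : ℝ) (A : Dimer N → Prop) : ℝ :=
  (∑ D : Dimer N, Set.indicator {D | A D} (wDim N J h) D) / ∑ D : Dimer N, wDim N J h D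

/-- The conditional probability `ℙ(A | B)` under the IMD Gibbs measure. -/
def condProbDim (N : ℕ) (J h : ℝ) (A B : Dimer N → Prop) : ℝ :=
  (∑ D : Dimer N, Set.indicator {D | A D ∧ B D} (wDim N J h) D) /
    ∑ D : Dimer N, Set.indicator {D | B D} (wDim N J h) D

/-- `g(x) = (√(e^{4x} + 4 e^{2x}) - e^{2x})/2`. -/
def gFun (x : ℝ) : ℝ := (Real.sqrt (Real.exp (4*x) + 4 * Real.exp (2*x)) - Real.exp (2*x)) / 2

/-- `τ(x) = (2x-1)J + h`. -/
def tauFun (J h x : ℝ) : ℝ := (2*x - 1) * J + h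

/-- `𝑝̃(m) = -J m² - (1 - g(τ(m)) + log(1 - g(τ(m))))/2`. -/
def ptilde (J h m : ℝ) : ℝ :=
  -J * m^2 - (1 - gFun (tauFun J h m) + Real.log (1 - gFun (tauFun J h m))) / 2

/-- The CDF of a centered Gaussian with variance `v`, evaluated at `z`. -/
def gaussCDF (v : ℝ) (z : ℝ) : ℝ :=
  (ProbabilityTheory.gaussianReal 0 (Real.toNNReal v) (Set.Iic z)).toReal

/-- Spin configurations `Σ = {0,1}^N`. -/
abbrev Config (N : ℕ) := Fin N → Bool

/-- `𝓐(σ) = {i : σ_i = 1}`. -/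
def ASet {N : ℕ} (σ : Config N) : Finset (Fin N) := Finset.univ.filter fun i => σ i = true

/-- `M(σ) = ∑ σ_i`. -/
def Msum {N : ℕ} (σ : Config N) : ℕ := (ASet σ).card

/-- Magnetization `m(σ) = M(σ)/N`. -/
def mConf {N : ℕ} (σ : Config N) : ℝ := (Msum σ : ℝ) / N

/-- `D(σ)`: the number of dimer configurations `D` with `𝓜(D) = 𝓐(σ)`. -/
def Dcount (N : ℕ) (σ : Config N) : ℕ :=
  (Finset.univ.filter fun D : Dimer N => monomers D = ASet σ).card

/-- The weight `D(σ) exp(-H(σ))` of the weighted Curie–Weiss model. -/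
def wConf (N : ℕ) (J h : ℝ) (σ : Config N) : ℝ :=
  (Dcount N σ : ℝ) * Real.exp (N * (J * mConf σ ^ 2 + bIMD N J h * mConf σ))

/-- The probability of an event `A` under the weighted Curie–Weiss Gibbs measure. -/
def probConf (N : ℕ) (J h : ℝ) (A : Config N → Prop) : ℝ :=
  (∑ σ : Config N, Set.indicator {σ | A σ} (wConf N J h) σ) / ∑ σ : Config N, wConf N J h σ

/-- Expectation under the weighted Curie–Weiss Gibbs measure. -/
def EConf (N : ℕ) (J h : ℝ) (f : Config N → ℝ) : ℝ :=
  (∑ σ : Config N, wConf N J h σ * f σ) / ∑ σ : Config N, wConf N J h σ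

/-- `L₁(m) = 2(1-m)(m² - (1-m)e^{2τ(m)})/((1-m) + e^{2τ(m)})`. -/
def Lone (J h m : ℝ) : ℝ :=
  2*(1-m)*(m^2 - (1-m)*Real.exp (2 * tauFun J h m)) / ((1-m) + Real.exp (2 * tauFun J h m))

/-- `L₂(m) = 4(1-m)(m² + (1-m)e^{2τ(m)})/((1-m) + e^{2τ(m)})`. -/
def Ltwo (J h m : ℝ) : ℝ :=
  4*(1-m)*(m^2 + (1-m)*Real.exp (2 * tauFun J h m)) / ((1-m) + Real.exp (2 * tauFun J h m))

/-- The configuration obtained from `σ` by setting the spins at `u, v` to `s, t`. -/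
def upd {N : ℕ} (σ : Config N) (u v : Fin N) (s t : Bool) : Config N :=
  fun i => if i = u then s else if i = v then t else σ i

/-- The edges of the complete graph, enumerated as ordered pairs `u < v`. -/
def cEdges (N : ℕ) : Finset (Fin N × Fin N) := Finset.univ.filter fun p => p.1 < p.2

/-- The probability of resampling the pair of spins at `(u,v)` to `(s,t)`:
the conditional distribution of `(σ_u, σ_v)` given `(σ_i)_{i ≠ u,v}`. -/
def qCond (N : ℕ) (J h : ℝ) (σ : Config N) (u v : Fin N) (s t : Bool) : ℝ :=
  wConf N J h (upd σ u v s t) / ∑ st : Bool × Bool, wConf N J h (upd σ u v st.1 st.2)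

/-- `E[F(σ, σ') | σ]` for the exchangeable pair `(σ, σ')` obtained by resampling the
spins at a uniformly chosen edge. -/
def condE2 (N : ℕ) (J h : ℝ) (F : Config N → Config N → ℝ) (σ : Config N) : ℝ :=
  ((cEdges N).card : ℝ)⁻¹ * ∑ p ∈ cEdges N, ∑ st : Bool × Bool,
    qCond N J h σ p.1 p.2 st.1 st.2 * F σ (upd σ p.1 p.2 st.1 st.2)

/-- The weight of the Gibbs measure conditioned on the event `S`. -/
def wCond (N : ℕ) (J h : ℝ) (S : Config N → Prop) (σ : Config N) : ℝ :=
  Set.indicator {σ | S σ} (wConf N J h) σ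

/-- `ℙ_ℓ(A) = ℙ(A | S)`, probability under the conditioned Gibbs measure. -/
def probL (N : ℕ) (J h : ℝ) (S A : Config N → Prop) : ℝ :=
  (∑ σ : Config N, Set.indicator {σ | A σ} (wCond N J h S) σ) / ∑ σ : Config N, wCond N J h S σ

/-- Expectation under the conditioned Gibbs measure `ℙ(·|S)`. -/
def EL (N : ℕ) (J h : ℝ) (S : Config N → Prop) (f : Config N → ℝ) : ℝ :=
  (∑ σ : Config N, wCond N J h S σ * f σ) / ∑ σ : Config N, wCond N J h S σ

/-- Resampling probability for the conditioned measure `ℙ(·|S)`. -/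
def qCondL (N : ℕ) (J h : ℝ) (S : Config N → Prop) (σ : Config N) (u v : Fin N)
    (s t : Bool) : ℝ :=
  wCond N J h S (upd σ u v s t) / ∑ st : Bool × Bool, wCond N J h S (upd σ u v st.1 st.2)

/-- `E_ℓ[F(σ, σ') | σ]` for the exchangeable pair under the conditioned measure. -/
def condE2L (N : ℕ) (J h : ℝ) (S : Config N → Prop) (F : Config N → Config N → ℝ)
    (σ : Config N) : ℝ :=
  ((cEdges N).card : ℝ)⁻¹ * ∑ p ∈ cEdges N, ∑ st : Bool × Bool,
    qCondL N J h S σ p.1 p.2 st.1 st.2 * F σ (upd σ p.1 p.2 st.1 st.2)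

/-- The maximizer set `O` of `𝑝̃` on `[0,1]`. -/
def maxSet (J h : ℝ) : Set ℝ :=
  {x | x ∈ Set.Icc (0:ℝ) 1 ∧ ∀ y ∈ Set.Icc (0:ℝ) 1, ptilde J h y ≤ ptilde J h x}

end

/-- The number of fixed-point-free involutions of an `n`-element set. -/
def pairingCount : ℕ → ℕ
  | 0 => 1
  | 1 => 0
  | n + 2 => (n + 1) * pairingCount n

lemma pairingCount_pos_of_even : ∀ n : ℕ, Even n → 0 < pairingCount n
  | 0, _ => by simp [pairingCount]
  | 1, h => by simp at h
  | n + 2, h => by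
    have hn : Even n := by simpa [Nat.even_add] using h
    simpa [pairingCount] using pairingCount_pos_of_even n hn

lemma pairingCount_eq_zero_of_odd : ∀ n : ℕ, Odd n → pairingCount n = 0
  | 0, h => by simp at h
  | 1, _ => rfl
  | n + 2, h => by
    have hn : Odd n := by simpa [Nat.odd_add] using h
    simp [pairingCount, pairingCount_eq_zero_of_odd n hn]

/-- The dimer configurations covering exactly the vertices of `S`. -/
def dimersOn {N : ℕ} (S : Finset (Fin N)) : Finset (Dimer N) :=
  Finset.univ.filter fun D => ∀ i, D.1 i = i ↔ i ∉ S

/-- Composition of an involution with a transposition commuting with it. -/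
def compSwap {N : ℕ} (u w : Fin N) (D : Dimer N)
    (hD : ∀ i, D.1 (Equiv.swap u w i) = Equiv.swap u w (D.1 i)) : Dimer N :=
  ⟨fun i => D.1 (Equiv.swap u w i), fun i => by simp [hD, D.2]⟩

lemma swap_comm_of_apply_eq {N : ℕ} {u w : Fin N} {D : Dimer N} (h : D.1 u = w) (i : Fin N) :
    D.1 (Equiv.swap u w i) = Equiv.swap u w (D.1 i) := by
  have h' : D.1 w = u := by rw [← h, D.2]
  by_cases hu : i = u
  · subst hu; simp [h, h']
  by_cases hw : i = w
  · subst hw; simp [h, h']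
  have h1 : D.1 i ≠ u := fun e => hw (by rw [← D.2 i, e, h])
  have h2 : D.1 i ≠ w := fun e => hu (by rw [← D.2 i, e, h'])
  rw [Equiv.swap_apply_of_ne_of_ne hu hw, Equiv.swap_apply_of_ne_of_ne h1 h2]

lemma swap_comm_of_apply_self {N : ℕ} {u w : Fin N} {D : Dimer N} (hu : D.1 u = u)
    (hw : D.1 w = w) (i : Fin N) :
    D.1 (Equiv.swap u w i) = Equiv.swap u w (D.1 i) := by
  by_cases hiu : i = u
  · subst hiu; simp [hu, hw]
  by_cases hiw : i = w
  · subst hiw; simp [hu, hw]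
  have h1 : D.1 i ≠ u := fun e => hiu (by rw [← D.2 i, e, hu])
  have h2 : D.1 i ≠ w := fun e => hiw (by rw [← D.2 i, e, hw])
  rw [Equiv.swap_apply_of_ne_of_ne hiu hiw, Equiv.swap_apply_of_ne_of_ne h1 h2]

lemma card_dimersOn_filter {N : ℕ} {S : Finset (Fin N)} {u w : Fin N} (hu : u ∈ S)
    (hw : w ∈ S.erase u) :
    ((dimersOn S).filter fun D => D.1 u = w).card = (dimersOn ((S.erase u).erase w)).card := by
  have hwu : w ≠ u := (Finset.mem_erase.1 hw).1
  have hwS : w ∈ S := (Finset.mem_erase.1 hw).2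
  have hfix : ∀ D ∈ dimersOn ((S.erase u).erase w), D.1 u = u ∧ D.1 w = w := by
    intro D hD
    simp only [dimersOn, Finset.mem_filter, Finset.mem_univ, true_and] at hD
    exact ⟨(hD u).2 (by simp), (hD w).2 (by simp)⟩
  refine Finset.card_bij'
    (fun D hD => compSwap u w D (swap_comm_of_apply_eq (Finset.mem_filter.1 hD).2))
    (fun D hD => compSwap u w D (swap_comm_of_apply_self (hfix D hD).1 (hfix D hD).2))
    ?_ ?_ ?_ ?_
  · intro D hD
    simp only [dimersOn, Finset.mem_filter, Finset.mem_univ, true_and] at hD ⊢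
    obtain ⟨hD, h⟩ := hD
    have h' : D.1 w = u := by rw [← h, D.2]
    intro i
    by_cases hiu : i = u
    · subst hiu; simp [compSwap, h']
    by_cases hiw : i = w
    · subst hiw; simp [compSwap, h]
    simp [compSwap, Equiv.swap_apply_of_ne_of_ne hiu hiw, hD i, hiu, hiw]
  · intro D hD
    obtain ⟨h1, h2⟩ := hfix D hD
    simp only [dimersOn, Finset.mem_filter, Finset.mem_univ, true_and] at hD ⊢
    refine ⟨fun i => ?_, by simp [compSwap, h2]⟩
    by_cases hiu : i = u
    · subst hiu; simp [compSwap, h2, hu, hwu]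
    by_cases hiw : i = w
    · subst hiw; simp [compSwap, h1, hwS, hwu.symm]
    simp [compSwap, Equiv.swap_apply_of_ne_of_ne hiu hiw, hD i, hiu, hiw]
  · intro D hD
    apply Subtype.ext
    funext i
    simp [compSwap]
  · intro D hD
    apply Subtype.ext
    funext i
    simp [compSwap]

lemma card_dimersOn {N : ℕ} (n : ℕ) :
    ∀ S : Finset (Fin N), S.card = n → (dimersOn S).card = pairingCount n := by
  induction n using Nat.strong_induction_on with
  | _ n ih =>
    intro S hS
    rcases S.eq_empty_or_nonempty with rfl | ⟨u, hu⟩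
    · obtain rfl : n = 0 := by simpa using hS.symm
      rw [pairingCount, Finset.card_eq_one]
      refine ⟨⟨fun i => i, fun _ => rfl⟩, ?_⟩
      ext D
      simp only [dimersOn, Finset.mem_filter, Finset.mem_univ, true_and, Finset.notMem_empty,
        not_false_eq_true, iff_true, Finset.mem_singleton]
      exact ⟨fun h => Subtype.ext (funext h), fun h i => by rw [h]⟩
    · have hmaps : ∀ D ∈ dimersOn S, D.1 u ∈ S.erase u := by
        intro D hD
        simp only [dimersOn, Finset.mem_filter, Finset.mem_univ, true_and] at hD
        have hne : D.1 u ≠ u := fun e => (hD u).1 e hu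
        refine Finset.mem_erase.2 ⟨hne, ?_⟩
        by_contra hc
        exact hne (by simpa [D.2] using ((hD (D.1 u)).2 hc).symm)
      rw [Finset.card_eq_sum_card_fiberwise hmaps]
      have hcard : (S.erase u).card = n - 1 := by rw [Finset.card_erase_of_mem hu, hS]
      have hterm : ∀ w ∈ S.erase u,
          ((dimersOn S).filter fun D => D.1 u = w).card = pairingCount (n - 2) := by
        intro w hw
        have hpos : 0 < S.card := Finset.card_pos.2 ⟨u, hu⟩
        rw [card_dimersOn_filter hu hw]
        exact ih (n - 2) (by omega) _ (by rw [Finset.card_erase_of_mem hw, hcard]; omega)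
      rw [Finset.sum_congr rfl hterm, Finset.sum_const, hcard, smul_eq_mul]
      have hpos : 0 < n := hS ▸ Finset.card_pos.2 ⟨u, hu⟩
      match n, hpos with
      | 1, _ => simp [pairingCount]
      | n + 2, _ => simp [pairingCount]

lemma Msum_le {N : ℕ} (σ : Config N) : Msum σ ≤ N := by
  simpa [Msum] using Finset.card_le_univ (ASet σ)

lemma Dcount_eq (N : ℕ) (σ : Config N) : Dcount N σ = pairingCount (N - Msum σ) := by
  rw [← card_dimersOn (N - Msum σ) (ASet σ)ᶜ (by simp [Finset.card_compl, Msum])]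
  unfold Dcount dimersOn
  congr 1
  ext D
  simp [monomers, Finset.ext_iff]

/-- The weight of a configuration with `M` monomers among `N` sites. -/
noncomputable def levelWeight (N : ℕ) (J h : ℝ) (M : ℕ) : ℝ :=
  (pairingCount (N - M) : ℝ) *
    Real.exp (N * (J * ((M : ℝ) / N) ^ 2 + bIMD N J h * ((M : ℝ) / N)))

lemma wConf_eq_levelWeight (N : ℕ) (J h : ℝ) (σ : Config N) :
    wConf N J h σ = levelWeight N J h (Msum σ) := by
  rw [wConf, levelWeight, Dcount_eq, mConf]

lemma levelWeight_eq_zero {N M : ℕ} (J h : ℝ) (hM : Odd (N - M)) : levelWeight N J h M = 0 := by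
  simp [levelWeight, pairingCount_eq_zero_of_odd _ hM]

lemma levelWeight_pos {N M : ℕ} (J h : ℝ) (hM : Even (N - M)) : 0 < levelWeight N J h M := by
  have := pairingCount_pos_of_even _ hM
  unfold levelWeight
  positivity

lemma even_sub_Msum {N : ℕ} {J h : ℝ} {σ : Config N} (hσ : wConf N J h σ ≠ 0) :
    Even (N - Msum σ) := by
  rw [wConf_eq_levelWeight] at hσ
  by_contra hc
  exact hσ (levelWeight_eq_zero J h (Nat.not_even_iff_odd.1 hc))

/-- Detailed ratio of the weights at two consecutive admissible levels. -/
lemma levelWeight_ratio {N A : ℕ} (J h : ℝ) (hA : A + 2 ≤ N) :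
    levelWeight N J h A * (N * Real.exp (2 * tauFun J h ((A : ℝ) / N) + 4 * J * (1 / (N : ℝ)))) =
      levelWeight N J h (A + 2) * ((N : ℝ) - A - 1) := by
  obtain ⟨n, rfl⟩ := Nat.exists_eq_add_of_le hA
  have h1 : A + 2 + n - A = n + 2 := by omega
  have h2 : A + 2 + n - (A + 2) = n := by omega
  have hN : (0 : ℝ) < ((A + 2 + n : ℕ) : ℝ) := by positivity
  have hc : ((A + 2 + n : ℕ) : ℝ) - A - 1 = n + 1 := by push_cast; ring
  rw [levelWeight, levelWeight, h1, h2, hc, pairingCount]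
  generalize hX : ((A + 2 + n : ℕ) : ℝ) = X at *
  have key : Real.exp (X * (J * ((A : ℝ) / X) ^ 2 + bIMD (A + 2 + n) J h * ((A : ℝ) / X))) *
      (X * Real.exp (2 * tauFun J h ((A : ℝ) / X) + 4 * J * (1 / X))) =
      Real.exp (X * (J * (((A + 2 : ℕ) : ℝ) / X) ^ 2 +
        bIMD (A + 2 + n) J h * (((A + 2 : ℕ) : ℝ) / X))) := by
    have hlog : ∀ y : ℝ, X * Real.exp y = Real.exp (Real.log X + y) := fun y => by
      rw [Real.exp_add, Real.exp_log hN]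
    rw [hlog, ← Real.exp_add]
    congr 1
    rw [bIMD, hX, tauFun]
    push_cast
    field_simp
    ring
  rw [← key]
  push_cast
  ring

lemma Msum_eq_sum {N : ℕ} (σ : Config N) : Msum σ = ∑ i, (σ i).toNat := by
  rw [Msum, ASet, Finset.card_filter]
  refine Finset.sum_congr rfl fun i _ => ?_
  cases σ i <;> simp

lemma Msum_upd {N : ℕ} (σ : Config N) {u v : Fin N} (huv : u ≠ v) (s t : Bool) :
    Msum (upd σ u v s t) + ((σ u).toNat + (σ v).toNat) = Msum σ + (s.toNat + t.toNat) := by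
  have hv : v ∈ (Finset.univ : Finset (Fin N)).erase u := by simp [huv.symm]
  have split : ∀ τ : Config N, Msum τ =
      (τ u).toNat + ((τ v).toNat + ∑ i ∈ (Finset.univ.erase u).erase v, (τ i).toNat) := by
    intro τ
    rw [Msum_eq_sum, ← Finset.add_sum_erase _ _ (Finset.mem_univ u),
      ← Finset.add_sum_erase _ _ hv]
  have hrest : ∑ i ∈ (Finset.univ.erase u).erase v, (upd σ u v s t i).toNat =
      ∑ i ∈ (Finset.univ.erase u).erase v, (σ i).toNat := by
    refine Finset.sum_congr rfl fun i hi => ?_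
    have hi' : i ≠ v ∧ i ≠ u := by simpa using hi
    simp [upd, hi'.1, hi'.2]
  rw [split (upd σ u v s t), split σ, hrest]
  have hu' : upd σ u v s t u = s := by simp [upd]
  have hv' : upd σ u v s t v = t := by simp [upd, huv.symm]
  rw [hu', hv']
  omega

/-- The conditional mean of `M - M'` given `σ` and the resampled edge `uv`. -/
noncomputable def edgeDrop (N : ℕ) (J h : ℝ) (σ : Config N) (u v : Fin N) : ℝ :=
  ∑ st : Bool × Bool, qCond N J h σ u v st.1 st.2 *
    ((Msum σ : ℝ) - Msum (upd σ u v st.1 st.2))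

lemma edgeDrop_eq {N : ℕ} (J h : ℝ) (σ : Config N) {u v : Fin N} (huv : u ≠ v) {A : ℕ}
    (hA : Msum (upd σ u v false false) = A) :
    edgeDrop N J h σ u v =
      (levelWeight N J h A * ((Msum σ : ℝ) - A) +
        2 * levelWeight N J h (A + 1) * ((Msum σ : ℝ) - (A + 1)) +
        levelWeight N J h (A + 2) * ((Msum σ : ℝ) - (A + 2))) /
      (levelWeight N J h A + 2 * levelWeight N J h (A + 1) + levelWeight N J h (A + 2)) := by
  have hft := Msum_upd σ huv false true
  have htf := Msum_upd σ huv true false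
  have htt := Msum_upd σ huv true true
  have hff := Msum_upd σ huv false false
  simp only [Bool.toNat_true, Bool.toNat_false] at hft htf htt hff
  have e1 : Msum (upd σ u v false true) = A + 1 := by omega
  have e2 : Msum (upd σ u v true false) = A + 1 := by omega
  have e3 : Msum (upd σ u v true true) = A + 2 := by omega
  simp only [edgeDrop, qCond, wConf_eq_levelWeight, Fintype.sum_prod_type, Fintype.sum_bool,
    e1, e2, e3, hA]
  push_cast
  ring

lemma edgeDrop_of_ne {N : ℕ} {J h : ℝ} {σ : Config N} (hσ : wConf N J h σ ≠ 0) {u v : Fin N}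
    (huv : u ≠ v) (hne : σ u ≠ σ v) : edgeDrop N J h σ u v = 0 := by
  have hff := Msum_upd σ huv false false
  have htt := Msum_upd σ huv true true
  have hle := Msum_le (upd σ u v true true)
  have hev := even_sub_Msum hσ
  have hM : (σ u).toNat + (σ v).toNat = 1 := by
    revert hne
    cases σ u <;> cases σ v <;> simp
  simp only [hM, Bool.toNat_true, Bool.toNat_false] at hff htt
  obtain ⟨A, hA⟩ : ∃ A, Msum (upd σ u v false false) = A := ⟨_, rfl⟩
  have hMA : Msum σ = A + 1 := by omega
  have ho : Odd (N - A) ∧ Odd (N - (A + 2)) := by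
    rw [hMA, Nat.even_iff] at hev
    simp only [Nat.odd_iff]
    omega
  rw [edgeDrop_eq J h σ huv hA, levelWeight_eq_zero J h ho.1, levelWeight_eq_zero J h ho.2, hMA]
  push_cast
  simp

lemma edgeDrop_of_true {N : ℕ} {J h : ℝ} {σ : Config N} (hσ : wConf N J h σ ≠ 0) {u v : Fin N}
    (huv : u ≠ v) (hu : σ u = true) (hv : σ v = true) :
    edgeDrop N J h σ u v = 2 * ((1 - mConf σ + 1 / (N : ℝ)) / ((1 - mConf σ + 1 / (N : ℝ)) +
      Real.exp (2 * tauFun J h (mConf σ) - 4 * J * (1 / (N : ℝ))))) := by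
  have hff := Msum_upd σ huv false false
  have hle := Msum_le σ
  have hev := even_sub_Msum hσ
  simp only [hu, hv, Bool.toNat_true, Bool.toNat_false] at hff
  obtain ⟨A, hA⟩ : ∃ A, Msum (upd σ u v false false) = A := ⟨_, rfl⟩
  have hMA : Msum σ = A + 2 := by omega
  rw [hMA] at hle hev
  have ho : Odd (N - (A + 1)) := by
    rw [Nat.even_iff] at hev
    rw [Nat.odd_iff]
    omega
  have hN : (0 : ℝ) < N := by exact_mod_cast (by omega : 0 < N)
  have hw := levelWeight_pos J h hev
  have hr := levelWeight_ratio J h hle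
  have hnA : (1 : ℝ) ≤ (N : ℝ) - A - 1 := by
    have : ((A + 2 : ℕ) : ℝ) ≤ N := by exact_mod_cast hle
    push_cast at this
    linarith
  have hm : mConf σ = ((A : ℝ) + 2) / N := by rw [mConf, hMA]; push_cast; rfl
  have he : 2 * tauFun J h (mConf σ) - 4 * J * (1 / (N : ℝ)) =
      2 * tauFun J h ((A : ℝ) / N) + 4 * J * (1 / (N : ℝ)) := by
    rw [hm, tauFun, tauFun]
    field_simp
    ring
  have hx : 1 - mConf σ + 1 / (N : ℝ) = ((N : ℝ) - A - 1) / N := by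
    rw [hm]
    field_simp
    ring
  rw [edgeDrop_eq J h σ huv hA, levelWeight_eq_zero J h ho, he, hx, hMA]
  have hE := Real.exp_pos (2 * tauFun J h ((A : ℝ) / N) + 4 * J * (1 / (N : ℝ)))
  generalize Real.exp (2 * tauFun J h ((A : ℝ) / N) + 4 * J * (1 / (N : ℝ))) = E at *
  have hwA : levelWeight N J h A = levelWeight N J h (A + 2) * (((N : ℝ) - A - 1) / N / E) := by
    field_simp
    linarith
  rw [hwA]
  generalize levelWeight N J h (A + 2) = w at *
  have hy : 0 < ((N : ℝ) - A - 1) / N := by positivity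
  generalize ((N : ℝ) - A - 1) / N = y at *
  push_cast
  field_simp
  ring

lemma edgeDrop_of_false {N : ℕ} {J h : ℝ} {σ : Config N} (hσ : wConf N J h σ ≠ 0) {u v : Fin N}
    (huv : u ≠ v) (hu : σ u = false) (hv : σ v = false) :
    edgeDrop N J h σ u v = -(2 * (Real.exp (2 * tauFun J h (mConf σ) + 4 * J * (1 / (N : ℝ))) /
      ((1 - mConf σ - 1 / (N : ℝ)) +
        Real.exp (2 * tauFun J h (mConf σ) + 4 * J * (1 / (N : ℝ)))))) := by
  have hff := Msum_upd σ huv false false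
  have htt := Msum_upd σ huv true true
  have hle := Msum_le (upd σ u v true true)
  have hev := even_sub_Msum hσ
  simp only [hu, hv, Bool.toNat_true, Bool.toNat_false] at hff htt
  obtain ⟨A, hA⟩ : ∃ A, Msum (upd σ u v false false) = A := ⟨_, rfl⟩
  have hMA : Msum σ = A := by omega
  have hle' : A + 2 ≤ N := by omega
  rw [hMA] at hev
  have ho : Odd (N - (A + 1)) ∧ Even (N - (A + 2)) := by
    rw [Nat.even_iff] at hev
    rw [Nat.odd_iff, Nat.even_iff]
    omega
  have hN : (0 : ℝ) < N := by exact_mod_cast (by omega : 0 < N)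
  have hw := levelWeight_pos J h ho.2
  have hr := levelWeight_ratio J h hle'
  have hnA : (1 : ℝ) ≤ (N : ℝ) - A - 1 := by
    have : ((A + 2 : ℕ) : ℝ) ≤ N := by exact_mod_cast hle'
    push_cast at this
    linarith
  have hm : mConf σ = (A : ℝ) / N := by rw [mConf, hMA]
  have hx : 1 - mConf σ - 1 / (N : ℝ) = ((N : ℝ) - A - 1) / N := by
    rw [hm]
    field_simp
  rw [edgeDrop_eq J h σ huv hA, levelWeight_eq_zero J h ho.1, hx, hMA, hm]
  have hE := Real.exp_pos (2 * tauFun J h ((A : ℝ) / N) + 4 * J * (1 / (N : ℝ)))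
  generalize Real.exp (2 * tauFun J h ((A : ℝ) / N) + 4 * J * (1 / (N : ℝ))) = E at *
  have hwA : levelWeight N J h A = levelWeight N J h (A + 2) * (((N : ℝ) - A - 1) / N / E) := by
    field_simp
    linarith
  rw [hwA]
  generalize levelWeight N J h (A + 2) = w at *
  have hy : 0 < ((N : ℝ) - A - 1) / N := by positivity
  generalize ((N : ℝ) - A - 1) / N = y at *
  field_simp
  ring

lemma two_mul_card_cEdges_filter {N : ℕ} (S : Finset (Fin N)) :
    2 * (((cEdges N).filter fun p => p.1 ∈ S ∧ p.2 ∈ S).card : ℝ) = S.card * (S.card - 1) := by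
  have hlt : (cEdges N).filter (fun p => p.1 ∈ S ∧ p.2 ∈ S) =
      S.offDiag.filter fun p => p.1 < p.2 := by
    ext p
    simp only [cEdges, Finset.mem_filter, Finset.mem_univ, true_and, Finset.mem_offDiag]
    exact ⟨fun h => ⟨⟨h.2.1, h.2.2, h.1.ne⟩, h.1⟩, fun h => ⟨h.2, h.1.1, h.1.2.1⟩⟩
  have hgt : (S.offDiag.filter fun p => ¬ p.1 < p.2).card =
      (S.offDiag.filter fun p => p.1 < p.2).card := by
    refine Finset.card_bij' (fun p _ => p.swap) (fun p _ => p.swap) ?_ ?_ ?_ ?_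
    · intro p hp
      simp only [Finset.mem_filter, Finset.mem_offDiag, Prod.fst_swap, Prod.snd_swap] at hp ⊢
      exact ⟨⟨hp.1.2.1, hp.1.1, hp.1.2.2.symm⟩,
        lt_of_le_of_ne (not_lt.1 hp.2) hp.1.2.2.symm⟩
    · intro p hp
      simp only [Finset.mem_filter, Finset.mem_offDiag, Prod.fst_swap, Prod.snd_swap] at hp ⊢
      exact ⟨⟨hp.1.2.1, hp.1.1, hp.1.2.2.symm⟩, not_lt.2 hp.2.le⟩
    · simp
    · simp
  have hsum := Finset.card_filter_add_card_filter_not (s := S.offDiag) (fun p => p.1 < p.2)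
  rw [hgt, Finset.offDiag_card] at hsum
  rw [hlt]
  have hle : S.card ≤ S.card * S.card := Nat.le_mul_self _
  have := congrArg (Nat.cast : ℕ → ℝ) hsum
  rw [Nat.cast_sub hle] at this
  push_cast at this
  linarith

/-- The conditional mean of `M - M'` at density `m`, with `ε = 1 / N`. -/
noncomputable def meanDrop (J h m ε : ℝ) : ℝ :=
  2 * (m * (m - ε) / (1 - ε)) *
      ((1 - m + ε) / ((1 - m + ε) + Real.exp (2 * tauFun J h m - 4 * J * ε))) -
    2 * ((1 - m) * (1 - m - ε) / (1 - ε)) *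
      (Real.exp (2 * tauFun J h m + 4 * J * ε) /
        ((1 - m - ε) + Real.exp (2 * tauFun J h m + 4 * J * ε)))

lemma condE2_Msum {N : ℕ} (hN : 1 ≤ N) {J h : ℝ} {σ : Config N} (hσ : wConf N J h σ ≠ 0) :
    condE2 N J h (fun σ σ' => (Msum σ : ℝ) - Msum σ') σ =
      meanDrop J h (mConf σ) (1 / (N : ℝ)) := by
  set X : ℝ := 2 * ((1 - mConf σ + 1 / (N : ℝ)) / ((1 - mConf σ + 1 / (N : ℝ)) +
      Real.exp (2 * tauFun J h (mConf σ) - 4 * J * (1 / (N : ℝ))))) with hX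
  set Y : ℝ := 2 * (Real.exp (2 * tauFun J h (mConf σ) + 4 * J * (1 / (N : ℝ))) /
      ((1 - mConf σ - 1 / (N : ℝ)) +
        Real.exp (2 * tauFun J h (mConf σ) + 4 * J * (1 / (N : ℝ))))) with hY
  have hedge : ∀ p ∈ cEdges N, edgeDrop N J h σ p.1 p.2 =
      (if p.1 ∈ ASet σ ∧ p.2 ∈ ASet σ then X else 0) -
        (if p.1 ∈ (ASet σ)ᶜ ∧ p.2 ∈ (ASet σ)ᶜ then Y else 0) := by
    intro p hp
    have hne : p.1 ≠ p.2 := (Finset.mem_filter.1 hp).2.ne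
    rcases hu : σ p.1 <;> rcases hv : σ p.2
    · rw [edgeDrop_of_false hσ hne hu hv]
      simp [ASet, hu, hv, hY]
    · rw [edgeDrop_of_ne hσ hne (by simp [hu, hv])]
      simp [ASet, hu, hv]
    · rw [edgeDrop_of_ne hσ hne (by simp [hu, hv])]
      simp [ASet, hu, hv]
    · rw [edgeDrop_of_true hσ hne hu hv]
      simp [ASet, hu, hv, hX]
  have hall : 2 * ((cEdges N).card : ℝ) = N * (N - 1) := by
    simpa using two_mul_card_cEdges_filter (Finset.univ : Finset (Fin N))
  have hA := two_mul_card_cEdges_filter (ASet σ)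
  have hB := two_mul_card_cEdges_filter (ASet σ)ᶜ
  have hcB : (((ASet σ)ᶜ.card : ℕ) : ℝ) = N - Msum σ := by
    rw [Finset.card_compl, Fintype.card_fin, ← Msum, Nat.cast_sub (Msum_le σ)]
  rw [hcB] at hB
  change 2 * _ = (Msum σ : ℝ) * (Msum σ - 1) at hA
  have hmain : condE2 N J h (fun σ σ' => (Msum σ : ℝ) - Msum σ') σ =
      ((cEdges N).card : ℝ)⁻¹ * ∑ p ∈ cEdges N, edgeDrop N J h σ p.1 p.2 := rfl
  rw [hmain, Finset.sum_congr rfl hedge, Finset.sum_sub_distrib, ← Finset.sum_filter,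
    ← Finset.sum_filter, Finset.sum_const, Finset.sum_const, nsmul_eq_mul, nsmul_eq_mul]
  generalize (((cEdges N).filter fun p => p.1 ∈ ASet σ ∧ p.2 ∈ ASet σ).card : ℝ) = a at *
  generalize (((cEdges N).filter fun p => p.1 ∈ (ASet σ)ᶜ ∧ p.2 ∈ (ASet σ)ᶜ).card : ℝ) = b at *
  have hcE : ((cEdges N).card : ℝ) = N * (N - 1) / 2 := by linarith
  have ha : a = (Msum σ : ℝ) * (Msum σ - 1) / 2 := by linarith
  have hb : b = ((N : ℝ) - Msum σ) * ((N : ℝ) - Msum σ - 1) / 2 := by linarith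
  have hdrop : meanDrop J h (mConf σ) (1 / (N : ℝ)) =
      mConf σ * (mConf σ - 1 / (N : ℝ)) / (1 - 1 / (N : ℝ)) * X -
        (1 - mConf σ) * (1 - mConf σ - 1 / (N : ℝ)) / (1 - 1 / (N : ℝ)) * Y := by
    rw [meanDrop, hX, hY]
    ring
  rw [hdrop, hcE, ha, hb, mConf]
  clear_value X Y
  rcases Nat.eq_or_lt_of_le hN with rfl | hN2
  · simp
  · have h1 : (0 : ℝ) < N - 1 := by
      have : (1 : ℝ) < N := by exact_mod_cast hN2
      linarith
    have h0 : (0 : ℝ) < N := by linarith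
    have h2 : (1 : ℝ) - 1 / N ≠ 0 := by
      have : (1 : ℝ) - 1 / N = (N - 1) / N := by field_simp
      rw [this]
      positivity
    field_simp

lemma abs_exp_sub_one_le_mul_exp {x b : ℝ} (hx : |x| ≤ b) :
    |Real.exp x - 1| ≤ |x| * Real.exp b := by
  have hb : 0 ≤ b := (abs_nonneg x).trans hx
  have h1 : 1 ≤ Real.exp b := Real.one_le_exp hb
  have h2 : Real.exp x ≤ Real.exp b := Real.exp_le_exp.2 ((le_abs_self x).trans hx)
  have h3 := Real.add_one_le_exp x
  have h4 : Real.exp x * (-x + 1) ≤ 1 := by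
    calc Real.exp x * (-x + 1) ≤ Real.exp x * Real.exp (-x) :=
          mul_le_mul_of_nonneg_left (Real.add_one_le_exp (-x)) (Real.exp_pos x).le
      _ = 1 := by rw [← Real.exp_add]; simp
  rw [abs_le]
  constructor
  · nlinarith [neg_abs_le x, abs_nonneg x]
  · calc Real.exp x - 1 ≤ x * Real.exp x := by linarith
      _ ≤ |x| * Real.exp x := mul_le_mul_of_nonneg_right (le_abs_self x) (Real.exp_pos x).le
      _ ≤ |x| * Real.exp b := mul_le_mul_of_nonneg_left h2 (abs_nonneg x)

lemma abs_ratio_sub_ratio_le {a x E E' ε c B D : ℝ} (ha : 0 ≤ a) (hx0 : 0 ≤ x) (hx1 : x ≤ 1)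
    (hc : 0 < c) (hE : c ≤ E) (hE' : c ≤ E') (hEB : E ≤ B) (hax : |a - x| ≤ ε)
    (hEE : |E' - E| ≤ D * ε) :
    |a / (a + E') - x / (x + E)| ≤ (B + D) / c ^ 2 * ε := by
  have hE0 : 0 < E := hc.trans_le hE
  have hE0' : 0 < E' := hc.trans_le hE'
  have hden : c ^ 2 ≤ (a + E') * (x + E) := by nlinarith
  have hden0 : 0 < (a + E') * (x + E) := by positivity
  have h1 : a + E' ≠ 0 := by positivity
  have h2 : x + E ≠ 0 := by positivity
  have heq : a / (a + E') - x / (x + E) = ((a - x) * E - x * (E' - E)) / ((a + E') * (x + E)) := by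
    field_simp
    ring
  have hnum : |(a - x) * E - x * (E' - E)| ≤ (B + D) * ε := by
    calc |(a - x) * E - x * (E' - E)| ≤ |(a - x) * E| + |x * (E' - E)| := abs_sub _ _
      _ = |a - x| * E + x * |E' - E| := by
          rw [abs_mul, abs_mul, abs_of_nonneg hx0, abs_of_pos hE0]
      _ ≤ ε * B + 1 * (D * ε) := by
          have hε : 0 ≤ ε := (abs_nonneg _).trans hax
          gcongr
      _ = (B + D) * ε := by ring
  rw [heq, abs_div, abs_of_pos hden0]
  calc |(a - x) * E - x * (E' - E)| / ((a + E') * (x + E))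
      ≤ (B + D) * ε / c ^ 2 :=
        div_le_div₀ ((abs_nonneg _).trans hnum) hnum (by positivity) hden
    _ = (B + D) / c ^ 2 * ε := by ring

lemma abs_pair_density_sub_sq_le {m ε : ℝ} (hm0 : 0 ≤ m) (hm1 : m ≤ 1) (hε0 : 0 ≤ ε)
    (hε : ε ≤ 1 / 2) : |m * (m - ε) / (1 - ε) - m ^ 2| ≤ 2 * ε := by
  have h1 : 0 < 1 - ε := by linarith
  have heq : m * (m - ε) / (1 - ε) - m ^ 2 = -(ε * (m * (1 - m)) / (1 - ε)) := by
    field_simp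
    ring
  have h2 : 0 ≤ m * (1 - m) := mul_nonneg hm0 (by linarith)
  rw [heq, abs_neg, abs_of_nonneg (by positivity), div_le_iff₀ h1]
  nlinarith [sq_nonneg (m - 1)]

lemma abs_mul_sub_mul_le {p s f g A B : ℝ} (hp : |p - s| ≤ A) (hs0 : 0 ≤ s) (hs1 : s ≤ 1)
    (hf : |f| ≤ 1) (hfg : |f - g| ≤ B) : |p * f - s * g| ≤ A + B := by
  have heq : p * f - s * g = (p - s) * f + s * (f - g) := by ring
  rw [heq]
  calc |(p - s) * f + s * (f - g)| ≤ |(p - s) * f| + |s * (f - g)| := abs_add_le _ _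
    _ = |p - s| * |f| + s * |f - g| := by rw [abs_mul, abs_mul, abs_of_nonneg hs0]
    _ ≤ A * 1 + 1 * B := by
        have := abs_nonneg (p - s)
        have := abs_nonneg (f - g)
        gcongr
        linarith
    _ = A + B := by ring

lemma abs_ratio_le_one {a E : ℝ} (ha : 0 ≤ a) (hE : 0 < E) : |a / (a + E)| ≤ 1 := by
  rw [abs_of_nonneg (by positivity), div_le_one (by positivity)]
  linarith

lemma Lone_eq {J h m : ℝ} (hm : m ≤ 1) :
    Lone J h m = 2 * (m ^ 2 * ((1 - m) / ((1 - m) + Real.exp (2 * tauFun J h m)))) -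
      2 * ((1 - m) ^ 2 * (1 - (1 - m) / ((1 - m) + Real.exp (2 * tauFun J h m)))) := by
  have hE := Real.exp_pos (2 * tauFun J h m)
  have : 1 - m + Real.exp (2 * tauFun J h m) ≠ 0 := by
    have : 0 ≤ 1 - m := by linarith
    positivity
  rw [Lone]
  field_simp
  ring

lemma exists_abs_meanDrop_sub_Lone_le {J : ℝ} (h : ℝ) (hJ : 0 ≤ J) :
    ∃ C : ℝ, 0 ≤ C ∧ ∀ m ε : ℝ, 0 ≤ m → m ≤ 1 → 0 ≤ ε → ε ≤ 1 / 2 → (m = 1 ∨ ε ≤ 1 - m) →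
      |meanDrop J h m ε - Lone J h m| ≤ C * ε := by
  set c : ℝ := Real.exp (2 * (h - J) - 2 * J) with hc
  set B : ℝ := Real.exp (2 * (h + J)) with hB
  set D : ℝ := B * (4 * J * Real.exp (2 * J)) with hD
  have hc0 : 0 < c := Real.exp_pos _
  have hB0 : 0 < B := Real.exp_pos _
  have hD0 : 0 ≤ D := by positivity
  refine ⟨2 * (2 + (B + D) / c ^ 2) + 2 * (2 + (B + D) / c ^ 2), by positivity, ?_⟩
  intro m ε hm0 hm1 hε0 hε hmε
  have hJε : 0 ≤ 4 * J * ε := by positivity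
  have hJε2 : 4 * J * ε ≤ 2 * J := by nlinarith
  have hτ1 : 2 * (h - J) ≤ 2 * tauFun J h m := by rw [tauFun]; nlinarith
  have hτ2 : 2 * tauFun J h m ≤ 2 * (h + J) := by rw [tauFun]; nlinarith
  set E : ℝ := Real.exp (2 * tauFun J h m) with hE
  have hEc : c ≤ E := Real.exp_le_exp.2 (by linarith)
  have hEB : E ≤ B := Real.exp_le_exp.2 hτ2
  have hpert : ∀ δ : ℝ, |δ| = 4 * J * ε → |Real.exp (2 * tauFun J h m + δ) - E| ≤ D * ε := by
    intro δ hδ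
    have h1 := abs_exp_sub_one_le_mul_exp (hδ.trans_le hJε2)
    have heq : Real.exp (2 * tauFun J h m + δ) - E = E * (Real.exp δ - 1) := by
      rw [Real.exp_add]
      ring
    rw [heq, abs_mul, abs_of_pos (Real.exp_pos _)]
    calc E * |Real.exp δ - 1| ≤ B * (|δ| * Real.exp (2 * J)) := by gcongr
      _ = D * ε := by rw [hδ, hD]; ring
  set Em : ℝ := Real.exp (2 * tauFun J h m - 4 * J * ε) with hEm
  set Ep : ℝ := Real.exp (2 * tauFun J h m + 4 * J * ε) with hEp
  have hEmc : c ≤ Em := Real.exp_le_exp.2 (by linarith)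
  have hEpc : c ≤ Ep := Real.exp_le_exp.2 (by linarith)
  have hEmE : |Em - E| ≤ D * ε := by
    have := hpert (-(4 * J * ε)) (by rw [abs_neg, abs_of_nonneg hJε])
    rwa [← sub_eq_add_neg] at this
  have hEpE : |Ep - E| ≤ D * ε := hpert _ (abs_of_nonneg hJε)
  have hx0 : 0 ≤ 1 - m := by linarith
  have hx1 : 1 - m ≤ 1 := by linarith
  have hfirst : |m * (m - ε) / (1 - ε) * ((1 - m + ε) / ((1 - m + ε) + Em)) -
      m ^ 2 * ((1 - m) / ((1 - m) + E))| ≤ 2 * ε + (B + D) / c ^ 2 * ε := by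
    refine abs_mul_sub_mul_le (abs_pair_density_sub_sq_le hm0 hm1 hε0 hε) (sq_nonneg m)
      (pow_le_one₀ hm0 hm1) (abs_ratio_le_one (by linarith) (Real.exp_pos _)) ?_
    exact abs_ratio_sub_ratio_le (by linarith) hx0 hx1 hc0 hEc hEmc hEB
      (by rw [add_sub_cancel_left, abs_of_nonneg hε0]) hEmE
  have hsecond : |(1 - m) * (1 - m - ε) / (1 - ε) * (Ep / ((1 - m - ε) + Ep)) -
      (1 - m) ^ 2 * (1 - (1 - m) / ((1 - m) + E))| ≤ 2 * ε + (B + D) / c ^ 2 * ε := by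
    rcases hmε with rfl | hmε
    · simp
      positivity
    have ha : 0 ≤ 1 - m - ε := by linarith
    have hEp0 : 0 < Ep := Real.exp_pos _
    have hcompl : Ep / ((1 - m - ε) + Ep) = 1 - (1 - m - ε) / ((1 - m - ε) + Ep) := by
      field_simp
      ring
    refine abs_mul_sub_mul_le (abs_pair_density_sub_sq_le hx0 hx1 hε0 hε) (sq_nonneg _)
      (pow_le_one₀ hx0 hx1) ?_ ?_
    · rw [abs_of_nonneg (by positivity), div_le_one (by positivity)]
      linarith
    · rw [hcompl, sub_sub_sub_cancel_left, abs_sub_comm]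
      exact abs_ratio_sub_ratio_le ha hx0 hx1 hc0 hEc hEpc hEB
        (by rw [sub_sub_cancel_left, abs_neg, abs_of_nonneg hε0]) hEpE
  rw [meanDrop, Lone_eq hm1]
  rw [abs_le] at hfirst hsecond ⊢
  constructor <;> linarith [hfirst.1, hfirst.2, hsecond.1, hsecond.2]

lemma abs_Lone_le {J h m : ℝ} (hm0 : 0 ≤ m) (hm1 : m ≤ 1) : |Lone J h m| ≤ 2 := by
  have hx0 : 0 ≤ 1 - m := by linarith
  have hE := Real.exp_pos (2 * tauFun J h m)
  have hr := abs_ratio_le_one hx0 hE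
  have hr0 : 0 ≤ (1 - m) / ((1 - m) + Real.exp (2 * tauFun J h m)) := by positivity
  rw [Lone_eq hm1]
  rw [abs_of_nonneg hr0] at hr
  generalize (1 - m) / ((1 - m) + Real.exp (2 * tauFun J h m)) = f at *
  have h1 : m ^ 2 ≤ 1 := pow_le_one₀ hm0 hm1
  have h2 : (1 - m) ^ 2 ≤ 1 := pow_le_one₀ hx0 (by linarith)
  rw [abs_le]
  constructor <;> nlinarith [sq_nonneg m, sq_nonneg (1 - m)]

lemma contDiffAt_Lone {J h m : ℝ} (hm : m ≤ 1) {n : WithTop ℕ∞} : ContDiffAt ℝ n (Lone J h) m := by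
  have hden : (1 - m) + Real.exp (2 * tauFun J h m) ≠ 0 := by
    have : 0 ≤ 1 - m := by linarith
    positivity
  unfold Lone tauFun at *
  exact ContDiffAt.div (by fun_prop) (by fun_prop) hden

/-- Taylor expansion at a point of flatness, with a remainder that is uniform on `[0, 1]`. -/
lemma exists_abs_sub_monomial_le {f : ℝ → ℝ} {x₀ : ℝ} {n : ℕ} (hx₀ : x₀ ∈ Set.Icc (0 : ℝ) 1)
    (hf : ∀ x ∈ Set.Icc (0 : ℝ) 1, ContDiffAt ℝ (n + 1 : ℕ) f x)
    (hder : ∀ l < n, iteratedDeriv l f x₀ = 0) :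
    ∃ C : ℝ, 0 ≤ C ∧ ∀ x ∈ Set.Icc (0 : ℝ) 1,
      |f x - iteratedDeriv n f x₀ / n.factorial * (x - x₀) ^ n| ≤ C * |x - x₀| ^ (n + 1) := by
  have hcd : ContDiffOn ℝ (n + 1 : ℕ) f (Set.Icc 0 1) := fun x hx => (hf x hx).contDiffWithinAt
  have huniq : UniqueDiffOn ℝ (Set.Icc (0 : ℝ) 1) := uniqueDiffOn_Icc zero_lt_one
  have hwithin : ∀ l ≤ n + 1,
      iteratedDerivWithin l f (Set.Icc 0 1) x₀ = iteratedDeriv l f x₀ := fun l hl =>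
    iteratedDerivWithin_eq_iteratedDeriv huniq ((hf x₀ hx₀).of_le (by exact_mod_cast hl)) hx₀
  set g : ℝ → ℝ := fun x => f x - iteratedDeriv n f x₀ / n.factorial * (x - x₀) ^ n with hg
  have htaylor : ∀ x, taylorWithinEval f (n + 1) (Set.Icc 0 1) x₀ x =
      iteratedDeriv n f x₀ / n.factorial * (x - x₀) ^ n +
        iteratedDeriv (n + 1) f x₀ / (n + 1).factorial * (x - x₀) ^ (n + 1) := by
    intro x
    rw [taylor_within_apply, Finset.sum_range_succ, Finset.sum_range_succ,
      Finset.sum_eq_zero, hwithin n (by omega), hwithin (n + 1) le_rfl]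
    · simp only [smul_eq_mul]
      ring
    · intro l hl
      rw [hwithin l (by have := Finset.mem_range.1 hl; omega), hder l (Finset.mem_range.1 hl),
        smul_zero]
  have hO : g =O[nhdsWithin x₀ (Set.Icc 0 1)] fun x => (x - x₀) ^ (n + 1) := by
    have h1 := (taylor_isLittleO (convex_Icc (0 : ℝ) 1) hx₀ hcd).isBigO
    have h2 : (fun x => iteratedDeriv (n + 1) f x₀ / (n + 1).factorial * (x - x₀) ^ (n + 1))
        =O[nhdsWithin x₀ (Set.Icc 0 1)] fun x => (x - x₀) ^ (n + 1) :=
      (Asymptotics.isBigO_refl _ _).const_mul_left _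
    refine (h1.add h2).congr_left fun x => ?_
    rw [htaylor, hg]
    ring
  obtain ⟨C, hC0, hC⟩ := hO.exists_pos
  rw [Asymptotics.isBigOWith_iff, eventually_nhdsWithin_iff, Metric.eventually_nhds_iff] at hC
  obtain ⟨δ, hδ, hC⟩ := hC
  have hcont : ContinuousOn g (Set.Icc 0 1) := by
    have := hcd.continuousOn
    exact this.sub (by fun_prop)
  obtain ⟨B, hB⟩ := isCompact_Icc.exists_bound_of_continuousOn hcont
  have hB0 : 0 ≤ B := (norm_nonneg _).trans (hB x₀ hx₀)
  refine ⟨C + B / δ ^ (n + 1), by positivity, fun x hx => ?_⟩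
  change |g x| ≤ _
  have hp : 0 ≤ |x - x₀| ^ (n + 1) := by positivity
  rcases lt_or_ge |x - x₀| δ with hlt | hge
  · have h1 := hC (by rwa [Real.dist_eq]) hx
    rw [Real.norm_eq_abs, norm_pow, Real.norm_eq_abs] at h1
    have h2 : 0 ≤ B / δ ^ (n + 1) * |x - x₀| ^ (n + 1) := by positivity
    linarith [add_mul C (B / δ ^ (n + 1)) (|x - x₀| ^ (n + 1))]
  · have h1 : B ≤ B / δ ^ (n + 1) * |x - x₀| ^ (n + 1) := by
      rw [div_mul_eq_mul_div, le_div_iff₀ (by positivity)]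
      gcongr
    have h2 := hB x hx
    rw [Real.norm_eq_abs] at h2
    have h3 : 0 ≤ C * |x - x₀| ^ (n + 1) := by positivity
    linarith [add_mul C (B / δ ^ (n + 1)) (|x - x₀| ^ (n + 1))]

lemma condE2_div (N : ℕ) (J h : ℝ) (F : Config N → Config N → ℝ) (c : ℝ) (σ : Config N) :
    condE2 N J h (fun σ σ' => F σ σ' / c) σ = condE2 N J h F σ / c := by
  simp only [condE2, mul_div_assoc', ← Finset.sum_div]

lemma mConf_mem_Icc {N : ℕ} (hN : 1 ≤ N) (σ : Config N) : mConf σ ∈ Set.Icc (0 : ℝ) 1 := by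
  have hN0 : (0 : ℝ) < N := by exact_mod_cast hN
  rw [mConf]
  exact ⟨by positivity, (div_le_one hN0).2 (by exact_mod_cast Msum_le σ)⟩

lemma exists_abs_meanDrop_mConf_sub_Lone_le {J : ℝ} (h : ℝ) (hJ : 0 ≤ J) :
    ∃ C : ℝ, 0 ≤ C ∧ ∀ N : ℕ, 1 ≤ N → ∀ σ : Config N,
      |meanDrop J h (mConf σ) (1 / (N : ℝ)) - Lone J h (mConf σ)| ≤ C * (1 / (N : ℝ)) := by
  obtain ⟨C, hC, hdrop⟩ := exists_abs_meanDrop_sub_Lone_le h hJ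
  refine ⟨C + 2, by positivity, fun N hN σ => ?_⟩
  obtain ⟨hm0, hm1⟩ := mConf_mem_Icc hN σ
  rcases Nat.eq_or_lt_of_le hN with rfl | hN2
  · have hL := abs_Lone_le (J := J) (h := h) hm0 hm1
    simp only [meanDrop, Nat.cast_one, div_one, sub_self, div_zero, mul_zero, zero_mul, zero_sub,
      abs_neg, mul_one]
    linarith
  · have hN0 : (0 : ℝ) < N := by exact_mod_cast hN
    have hε : 1 / (N : ℝ) ≤ 1 / 2 :=
      one_div_le_one_div_of_le two_pos (by exact_mod_cast hN2)
    have hcase : mConf σ = 1 ∨ 1 / (N : ℝ) ≤ 1 - mConf σ := by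
      rcases (Msum_le σ).eq_or_lt with he | hlt
      · left
        rw [mConf, he, div_self hN0.ne']
      · right
        have : ((Msum σ + 1 : ℕ) : ℝ) ≤ N := by exact_mod_cast hlt
        push_cast at this
        rw [mConf, le_sub_iff_add_le, ← add_div, div_le_one hN0]
        linarith
    have h1 := hdrop _ _ hm0 hm1 (by positivity) hε hcase
    have h2 : 0 ≤ 2 * (1 / (N : ℝ)) := by positivity
    linarith

/-- Stein linearization of the first conditional moment: with
`W = (M - N m₀)/N^{(2k+1)/(2k+2)}`, one has `E[W - W' | σ] = g(W) + r(W)` where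
`g(W) = L₁^{(2k+1)}(m₀) W^{2k+1}/((2k+1)! N^{(2k+1)/(k+1)})` and
`|r(W)| ≤ K N^{-(4k+3)/(2k+2)} (W^{2k+2} + 1)`. -/
theorem stmt7 (J h : ℝ) (hJ : 0 ≤ J) (k : ℕ) (hk : k = 0 ∨ k = 1)
    (m₀ : ℝ) (hm₀ : m₀ ∈ Set.Icc (0:ℝ) 1)
    (hmax : ∀ m ∈ Set.Icc (0:ℝ) 1, ptilde J h m ≤ ptilde J h m₀)
    (huniq : ∀ m ∈ Set.Icc (0:ℝ) 1, ptilde J h m = ptilde J h m₀ → m = m₀)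
    (hder0 : ∀ l : ℕ, l ≤ 2*k → iteratedDeriv l (Lone J h) m₀ = 0)
    (hderpos : 0 < iteratedDeriv (2*k+1) (Lone J h) m₀) :
    ∃ K : ℝ, ∀ N : ℕ, 1 ≤ N →
      let W : Config N → ℝ :=
        fun σ => ((Msum σ : ℝ) - N * m₀) / (N:ℝ) ^ ((2*(k:ℝ)+1)/(2*(k:ℝ)+2))
      ∃ r : ℝ → ℝ, ∀ σ : Config N, wConf N J h σ ≠ 0 →
        condE2 N J h (fun σ σ' => W σ - W σ') σ
            = iteratedDeriv (2*k+1) (Lone J h) m₀ /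
                ((Nat.factorial (2*k+1) : ℝ) * (N:ℝ) ^ ((2*(k:ℝ)+1)/((k:ℝ)+1)))
                * (W σ)^(2*k+1)
              + r (W σ) ∧
        |r (W σ)| ≤ K / (N:ℝ) ^ ((4*(k:ℝ)+3)/(2*(k:ℝ)+2)) * ((W σ)^(2*k+2) + 1) := by
  obtain ⟨C₁, hC₁, hdrop⟩ := exists_abs_meanDrop_mConf_sub_Lone_le h hJ
  obtain ⟨C₂, hC₂, htaylor⟩ := exists_abs_sub_monomial_le (n := 2 * k + 1) hm₀
    (fun x hx => contDiffAt_Lone (J := J) (h := h) hx.2) (fun l hl => hder0 l (by omega))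
  refine ⟨C₁ + C₂, fun N hN => ?_⟩
  intro W
  have hN0 : (0 : ℝ) < N := by exact_mod_cast hN
  set t : ℝ := (N : ℝ) ^ (1 / (2 * (k : ℝ) + 2)) with ht
  have ht0 : 0 < t := Real.rpow_pos_of_pos hN0 _
  have hpow : ∀ (j : ℕ) (y : ℝ), y = j / (2 * (k : ℝ) + 2) → (N : ℝ) ^ y = t ^ j := by
    intro j y hy
    rw [ht, ← Real.rpow_natCast, ← Real.rpow_mul hN0.le, hy]
    congr 1
    ring
  have hNt : (N : ℝ) = t ^ (2 * k + 2) := by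
    rw [← hpow (2 * k + 2) 1 (by push_cast; field_simp), Real.rpow_one]
  have hα : (N : ℝ) ^ ((2 * (k : ℝ) + 1) / (2 * (k : ℝ) + 2)) = t ^ (2 * k + 1) :=
    hpow _ _ (by push_cast; rfl)
  have hβ : (N : ℝ) ^ ((2 * (k : ℝ) + 1) / ((k : ℝ) + 1)) = t ^ (4 * k + 2) :=
    hpow _ _ (by push_cast; field_simp; ring)
  have hγ : (N : ℝ) ^ ((4 * (k : ℝ) + 3) / (2 * (k : ℝ) + 2)) = t ^ (4 * k + 3) :=
    hpow _ _ (by push_cast; rfl)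
  rw [hβ, hγ]
  set c := iteratedDeriv (2 * k + 1) (Lone J h) m₀
  refine ⟨fun w => meanDrop J h (m₀ + w / t) (1 / (N : ℝ)) / t ^ (2 * k + 1) -
    c / ((Nat.factorial (2 * k + 1) : ℝ) * t ^ (4 * k + 2)) * w ^ (2 * k + 1), fun σ hσ => ?_⟩
  have hW : W σ = (mConf σ - m₀) * t := by
    change ((Msum σ : ℝ) - N * m₀) / (N : ℝ) ^ ((2 * (k : ℝ) + 1) / (2 * (k : ℝ) + 2)) = _
    rw [hα, mConf, hNt]
    field_simp
    ring
  have hm : m₀ + W σ / t = mConf σ := by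
    rw [hW]
    field_simp
    ring
  have hcond : condE2 N J h (fun σ σ' => W σ - W σ') σ =
      meanDrop J h (mConf σ) (1 / (N : ℝ)) / t ^ (2 * k + 1) := by
    rw [← condE2_Msum hN hσ, ← condE2_div]
    congr 1
    funext σ₁ σ₂
    change ((Msum σ₁ : ℝ) - N * m₀) / (N : ℝ) ^ ((2 * (k : ℝ) + 1) / (2 * (k : ℝ) + 2)) -
      ((Msum σ₂ : ℝ) - N * m₀) / (N : ℝ) ^ ((2 * (k : ℝ) + 1) / (2 * (k : ℝ) + 2)) = _
    rw [hα]
    ring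
  refine ⟨by simp only [hcond, hm]; ring, ?_⟩
  have h1 := hdrop N hN σ
  have h2 := htaylor (mConf σ) (mConf_mem_Icc hN σ)
  have hrem : meanDrop J h (mConf σ) (1 / (N : ℝ)) / t ^ (2 * k + 1) -
      c / ((Nat.factorial (2 * k + 1) : ℝ) * t ^ (4 * k + 2)) * W σ ^ (2 * k + 1) =
      ((meanDrop J h (mConf σ) (1 / (N : ℝ)) - Lone J h (mConf σ)) +
        (Lone J h (mConf σ) - c / (Nat.factorial (2 * k + 1) : ℝ) *
          (mConf σ - m₀) ^ (2 * k + 1))) / t ^ (2 * k + 1) := by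
    rw [hW, mul_pow, show 4 * k + 2 = (2 * k + 1) + (2 * k + 1) by ring, pow_add]
    field_simp
    ring
  have heven : |mConf σ - m₀| ^ (2 * k + 1 + 1) = (mConf σ - m₀) ^ (2 * k + 2) :=
    Even.pow_abs ⟨k + 1, by ring⟩ _
  have hWpow : W σ ^ (2 * k + 2) = (mConf σ - m₀) ^ (2 * k + 2) * N := by
    rw [hW, mul_pow, ← hNt]
  have hsq : 0 ≤ (mConf σ - m₀) ^ (2 * k + 2) := Even.pow_nonneg ⟨k + 1, by ring⟩ _
  rw [heven] at h2
  simp only [hm]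
  rw [hrem, abs_div, abs_of_pos (pow_pos ht0 (2 * k + 1)), hWpow,
    show 4 * k + 3 = (2 * k + 2) + (2 * k + 1) by ring, pow_add t (2 * k + 2), ← hNt,
    div_le_iff₀ (by positivity)]
  have hfinal : (C₁ + C₂) / (N * t ^ (2 * k + 1)) * ((mConf σ - m₀) ^ (2 * k + 2) * N + 1) *
      t ^ (2 * k + 1) = (C₁ + C₂) * (1 / (N : ℝ)) + (C₁ + C₂) * (mConf σ - m₀) ^ (2 * k + 2) := by
    field_simp
    ring
  rw [hfinal]
  have hn : 0 ≤ C₂ * (1 / (N : ℝ)) := by positivity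
  have hn' : 0 ≤ C₁ * (mConf σ - m₀) ^ (2 * k + 2) := by positivity
  refine (abs_add_le _ _).trans ((add_le_add h1 h2).trans ?_)
  linarith
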